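/- A semiprimary left self-injective algebra over a field K whose dimension over K is at most countable is quasi-Frobenius. -/

import Mathlib

open Cardinal

/-- A ring is *semiprimary* if its Jacobson radical `J` is nilpotent
(`J ^ n = 0`, expressed elementwise: every product of `n` elements of `J` vanishes)
and the quotient ring `A / J` is a semisimple ring. -/
def IsSemiprimary (A : Type*) [Ring A] : Prop :=
  IsSemisimpleRing (RingCon.Quotient (⊥ : TwoSidedIdeal A).jacobson.ringCon) ∧
  ∃ n : ℕ, 0 < n ∧ ∀ f : Fin n → A,
    (∀ i, f i ∈ Ideal.jacobson (⊥ : Ideal A)) → (List.ofFn f).prod = 0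

/-- A ring is *quasi-Frobenius* if it is left self-injective and left artinian. -/
def IsQuasiFrobenius (A : Type*) [Ring A] : Prop :=
  Module.Injective A A ∧ IsArtinianRing A

/-!
Let `J` be the Jacobson radical and `S = {s | J * s = 0}` the left socle. Self-injectivity makes
`I ↦ S * I` injective and `I ↦ I * S` surjective as maps from the two-sided ideals containing `J`
to the two-sided ideals contained in `S`. As `A ⧸ J` is semisimple, there are only finitely many of
the former, so `I ↦ I * S` is injective as well. Since `J` and the left annihilator of `S` are both
sent to zero, they agree, and it follows that every simple left module embeds into `A`.

If `A` were not left noetherian, then, `J` being nilpotent, some left ideal `X` would have a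
quotient containing an independent sequence of simple submodules `T n`. Take nonzero maps
`f n : T n → A`. For every sequence of scalars `c n`, the maps `c n • f n` extend to a common map on
that quotient, which pulls back to right multiplication by an element of `A` on `X`. Thus `A` maps
onto the space of all scalar sequences, whose dimension is `#K ^ ℵ₀ > ℵ₀`.
-/

universe u v

open scoped Pointwise in
theorem pow_le_span_pow {A : Type*} [Ring A] (I : Ideal A) (n : ℕ) :
    I ^ n ≤ Ideal.span ((I : Set A) ^ n) := by
  induction n with
  | zero => simp [Submodule.pow_zero, Ideal.one_eq_top]
  | succ n ih =>
    rw [Submodule.pow_succ, Ideal.mul_le]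
    intro x hx a ha
    have span_le : Ideal.span ((I : Set A) ^ n) ≤
        Submodule.comap (LinearMap.toSpanSingleton A A a) (Ideal.span ((I : Set A) ^ (n + 1))) :=
      Ideal.span_le.mpr fun y hy ↦
        Ideal.subset_span (pow_succ (I : Set A) n ▸ Set.mul_mem_mul hy ha)
    exact span_le (ih hx)

theorem IsSemiprimary.isSemiprimaryRing {A : Type*} [Ring A] (h : IsSemiprimary A) :
    IsSemiprimaryRing A := by
  obtain ⟨semisimple, n, -, prod_eq_zero⟩ := h
  constructor
  · let c := (⊥ : TwoSidedIdeal A).jacobson.ringCon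
    have c_le_ker : c ≤ RingCon.ker (Ideal.Quotient.mk (Ring.jacobson A)) := by
      intro x y hxy
      have mem : x - y ∈ TwoSidedIdeal.asIdeal (⊥ : TwoSidedIdeal A).jacobson :=
        (TwoSidedIdeal.rel_iff _ x y).mp hxy
      rw [TwoSidedIdeal.asIdeal_jacobson, TwoSidedIdeal.bot_asIdeal, Ideal.jacobson_bot] at mem
      exact Ideal.Quotient.eq.mpr mem
    exact RingHom.isSemisimpleRing_of_surjective (c.lift _ c_le_ker)
      (RingCon.lift_surjective_of_surjective _ Ideal.Quotient.mk_surjective)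
  · refine ⟨n, eq_bot_iff.mpr ((pow_le_span_pow _ n).trans (Ideal.span_le.mpr fun x hx ↦ ?_))⟩
    obtain ⟨f, rfl⟩ := Set.mem_pow.mp hx
    exact prod_eq_zero _ fun i ↦ Ideal.jacobson_bot.ge (f i).2

section Nilpotent

variable {R M : Type*} [Ring R] [AddCommGroup M] [Module R M] {I : Ideal R}

theorem exists_ne_zero_smul_eq_zero_of_isNilpotent [I.IsTwoSided] (hI : IsNilpotent I)
    {N : Submodule R M} (hN : N ≠ ⊥) : ∃ x ∈ N, x ≠ 0 ∧ ∀ a ∈ I, a • x = 0 := by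
  obtain ⟨n, hn⟩ := hI
  obtain ⟨k, hk, hk'⟩ : ∃ k, I ^ k • N ≠ ⊥ ∧ I ^ (k + 1) • N = ⊥ :=
    Nat.exists_not_and_succ_of_not_zero_of_exists (p := fun k ↦ I ^ k • N = ⊥)
      (by rwa [Submodule.pow_zero, Ideal.one_eq_top, Submodule.top_smul])
      ⟨n, by rw [hn, Submodule.zero_eq_bot, Submodule.bot_smul]⟩
  obtain ⟨x, hx, hx0⟩ := Submodule.exists_mem_ne_zero_of_ne_bot hk
  refine ⟨x, Submodule.smul_le_right hx, hx0, fun a ha ↦ ?_⟩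
  have mem : a • x ∈ I • I ^ k • N := Submodule.smul_mem_smul ha hx
  rwa [← Submodule.mul_smul, ← Ideal.IsTwoSided.pow_succ, hk', Submodule.mem_bot] at mem

theorem le_of_le_sup_smul_of_isNilpotent (hI : IsNilpotent I) {N P : Submodule R M}
    (h : P ≤ N ⊔ I • P) : P ≤ N := by
  obtain ⟨n, hn⟩ := hI
  have le_sup_pow (k : ℕ) : P ≤ N ⊔ I ^ k • P := by
    induction k with
    | zero => simp [Submodule.pow_zero, Ideal.one_eq_top]
    | succ k ih =>
      calc P ≤ N ⊔ I ^ k • P := ih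
        _ ≤ N ⊔ I ^ k • (N ⊔ I • P) := sup_le_sup_left (Submodule.smul_mono le_rfl h) _
        _ ≤ N ⊔ I ^ (k + 1) • P := by
          rw [Submodule.smul_sup, ← sup_assoc, Submodule.pow_succ, Submodule.mul_smul]
          exact sup_le_sup_right (sup_le le_rfl Submodule.smul_le_right) _
  simpa [hn] using le_sup_pow n

theorem finite_of_finite_quotient_smul_top_of_isNilpotent (hI : IsNilpotent I)
    [Module.Finite R (M ⧸ I • (⊤ : Submodule R M))] : Module.Finite R M := by
  obtain ⟨n, f, hf⟩ := Module.Finite.exists_fin' R (M ⧸ I • (⊤ : Submodule R M))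
  obtain ⟨g, hg⟩ := Module.projective_lifting_property (I • (⊤ : Submodule R M)).mkQ f
    (Submodule.mkQ_surjective _)
  have sup_eq_top : LinearMap.range g ⊔ I • ⊤ = ⊤ := by
    rw [sup_comm, ← Submodule.map_mkQ_eq_top, ← LinearMap.range_comp, hg,
      LinearMap.range_eq_top.mpr hf]
  exact Module.Finite.of_surjective g (LinearMap.range_eq_top.mp
    (top_le_iff.mp (le_of_le_sup_smul_of_isNilpotent hI sup_eq_top.ge)))

end Nilpotent

section SemisimpleModRadical

variable {A : Type*} [Ring A]

theorem exists_mem_forall_mul_one_sub_mem_jacobson [IsSemisimpleRing (A ⧸ Ring.jacobson A)]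
    (L : Ideal A) : ∃ e ∈ L, ∀ x ∈ L, x * (1 - e) ∈ Ring.jacobson A := by
  let q := Ideal.Quotient.mk (Ring.jacobson A)
  obtain ⟨ε, hε, map_eq_span⟩ := IsSemisimpleRing.ideal_eq_span_idempotent (L.map q)
  obtain ⟨e, he, rfl⟩ := (Ideal.mem_map_iff_of_surjective q Ideal.Quotient.mk_surjective).mp
    (map_eq_span ▸ Ideal.mem_span_singleton_self ε)
  refine ⟨e, he, fun x hx ↦ ?_⟩
  obtain ⟨y, hy⟩ := Ideal.mem_span_singleton'.mp (map_eq_span ▸ Ideal.mem_map_of_mem q hx)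
  rw [← Ideal.Quotient.eq_zero_iff_mem, map_mul, map_sub, map_one]
  change q x * (1 - q e) = 0
  rw [← hy, mul_assoc, hε.mul_one_sub_self, mul_zero]

theorem finite_setOf_isTwoSided [IsSemisimpleRing A] : {I : Ideal A | I.IsTwoSided}.Finite := by
  have : Finite (fullyInvariantSubmodule A A) :=
    Finite.of_equiv _ (OrderIso.setIsotypicComponents (R := A) (M := A)).toEquiv
  refine (Set.toFinite (fullyInvariantSubmodule A A : Set (Ideal A))).subset fun I hI ↦ ?_
  exact mem_fullyInvariantSubmodule_iff.mpr (isFullyInvariant_iff_isTwoSided.mpr hI)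

theorem finite_setOf_isTwoSided_jacobson_le [IsSemisimpleRing (A ⧸ Ring.jacobson A)] :
    {I : Ideal A | I.IsTwoSided ∧ Ring.jacobson A ≤ I}.Finite := by
  let q := Ideal.Quotient.mk (Ring.jacobson A)
  refine (finite_setOf_isTwoSided.image (Ideal.comap q)).subset ?_
  rintro I ⟨hI, le⟩
  refine ⟨I.map q, inferInstanceAs (I.map q).IsTwoSided, ?_⟩
  rw [Ideal.comap_map_of_surjective q Ideal.Quotient.mk_surjective, ← RingHom.ker_eq_comap_bot,
    Ideal.mk_ker, sup_eq_left.mpr le]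

theorem le_jacobson_of_forall_exists_one_sub_mul_eq_one {I : Ideal A} [I.IsTwoSided]
    (h : ∀ x ∈ I, ∃ v, (1 - x) * v = 1) : I ≤ Ring.jacobson A := by
  intro x hx
  rw [← Ideal.jacobson_bot, Ideal.mem_jacobson_iff]
  intro y
  have hyx : -(y * x) ∈ I := neg_mem (I.mul_mem_left y hx)
  obtain ⟨v, hv⟩ := h _ hyx
  -- `v` is again `1` minus an element of `I`, so it has a right inverse besides its left inverse.
  have v_eq : 1 - (1 - v) = v := sub_sub_cancel 1 v
  have one_sub_v : 1 - v = y * x * v := by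
    rw [← hv]; noncomm_ring
  obtain ⟨w, hw⟩ := h (1 - v) (one_sub_v ▸ I.mul_mem_right v (I.mul_mem_left y hx))
  rw [v_eq] at hw
  have left_inv : v * (1 - -(y * x)) = 1 := by
    rwa [left_inv_eq_right_inv hv hw]
  refine ⟨v, ?_⟩
  rw [Ideal.mem_bot, ← left_inv]
  noncomm_ring

theorem isSemisimpleModule_of_isTorsionBySet_jacobson [IsSemisimpleRing (A ⧸ Ring.jacobson A)]
    {M : Type*} [AddCommGroup M] [Module A M]
    (h : Module.IsTorsionBySet A M (Ring.jacobson A)) : IsSemisimpleModule A M := by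
  let _ := h.module
  exact h.isSemisimpleModule_iff.mp inferInstance

theorem isNoetherianRing_of_forall_finite_of_isSemisimpleModule [IsSemiprimaryRing A]
    (h : ∀ (X : Ideal A) (N : Submodule A X), IsSemisimpleModule A (X ⧸ N) →
      Module.Finite A (X ⧸ N)) : IsNoetherianRing A := by
  refine ⟨fun X ↦ Module.Finite.iff_fg.mp ?_⟩
  have torsion : Module.IsTorsionBySet A (X ⧸ Ring.jacobson A • (⊤ : Submodule A X))
      (Ring.jacobson A) :=
    (Module.isTorsionBySet_quotient_iff _ _).mpr fun x j hj ↦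
      Submodule.smul_mem_smul hj Submodule.mem_top
  have := h X _ (isSemisimpleModule_of_isTorsionBySet_jacobson torsion)
  exact finite_of_finite_quotient_smul_top_of_isNilpotent (IsSemiprimaryRing.isNilpotent (R := A))

end SemisimpleModRadical

section Injective

theorem exists_comp_eq_of_ker_le {R : Type u} {Q : Type v} {M N : Type*} [Ring R] [Small.{v} R]
    [AddCommGroup Q] [Module R Q] [Module.Injective R Q] [AddCommGroup M] [Module R M]
    [AddCommGroup N] [Module R N] (φ : M →ₗ[R] N) (g : M →ₗ[R] Q)
    (h : LinearMap.ker φ ≤ LinearMap.ker g) : ∃ k : N →ₗ[R] Q, k ∘ₗ φ = g := by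
  obtain ⟨k, hk⟩ := Module.Injective.extension_property R Q _ _ ((LinearMap.ker φ).liftQ φ le_rfl)
    (LinearMap.ker_eq_bot.mp (Submodule.ker_liftQ_eq_bot _ _ le_rfl le_rfl))
    ((LinearMap.ker φ).liftQ g h)
  refine ⟨k, LinearMap.ext fun x ↦ ?_⟩
  exact LinearMap.congr_fun hk (Submodule.Quotient.mk x)

variable {A : Type*} [Ring A] [Module.Injective A A]

theorem exists_eq_mul_of_forall_mul_eq_zero {t y : A} (h : ∀ x, x * t = 0 → x * y = 0) :
    ∃ b, y = t * b := by
  obtain ⟨k, hk⟩ := exists_comp_eq_of_ker_le (LinearMap.toSpanSingleton A A t)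
    (LinearMap.toSpanSingleton A A y) h
  have k_t : k t = y := by simpa using LinearMap.congr_fun hk 1
  refine ⟨k 1, ?_⟩
  rw [← k_t, ← smul_eq_mul, ← map_smul, smul_eq_mul, mul_one]

end Injective

/-- The right annihilator `{a | I * a = 0}` of a two-sided ideal `I`. It would only be a right ideal
if `I` were not closed under right multiplication. -/
def rightAnnihilator {A : Type*} [Ring A] (I : Ideal A) [I.IsTwoSided] : Ideal A where
  carrier := {a | ∀ x ∈ I, x * a = 0}
  add_mem' ha hb x hx := by rw [mul_add, ha x hx, hb x hx, add_zero]
  zero_mem' x _ := mul_zero x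
  smul_mem' c a ha x hx := by rw [smul_eq_mul, ← mul_assoc, ha _ (I.mul_mem_right c hx)]

instance {A : Type*} [Ring A] (I : Ideal A) [I.IsTwoSided] : (rightAnnihilator I).IsTwoSided where
  mul_mem_of_left b ha x hx := by rw [← mul_assoc, ha x hx, zero_mul]

/-- The right annihilator of the Jacobson radical of `A`. When `A` is semisimple modulo its
radical, this is the socle of `A` as a left module over itself. -/
abbrev leftSocle (A : Type*) [Ring A] : Ideal A :=
  rightAnnihilator (Ring.jacobson A)

theorem colon_leftSocle_mul {A : Type*} [Ring A] [IsSemisimpleRing (A ⧸ Ring.jacobson A)]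
    [Module.Injective A A] {N : Ideal A} [N.IsTwoSided] (hN : N ≤ leftSocle A) :
    N.colon (leftSocle A : Set A) * leftSocle A = N := by
  refine le_antisymm (Ideal.mul_le.mpr fun a ha s hs ↦ Submodule.mem_colon.mp ha s hs) fun t ht ↦ ?_
  obtain ⟨e, he, mul_one_sub_e⟩ := exists_mem_forall_mul_one_sub_mem_jacobson
    (LinearMap.ker (LinearMap.toSpanSingleton A A t))
  have e_mul_t : e * t = 0 := he
  have mem_colon : 1 - e ∈ N.colon (leftSocle A : Set A) := by
    refine Submodule.mem_colon.mpr fun s hs ↦ ?_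
    obtain ⟨b, hb⟩ : ∃ b, (1 - e) * s = t * b := exists_eq_mul_of_forall_mul_eq_zero fun x hx ↦ by
      rw [← mul_assoc, hs _ (mul_one_sub_e x hx)]
    rw [smul_eq_mul, hb]
    exact N.mul_mem_right b ht
  have t_eq : t = (1 - e) * t := by rw [sub_mul, one_mul, e_mul_t, sub_zero]
  rw [t_eq]
  exact Ideal.mul_mem_mul mem_colon (hN ht)

section SelfInjective

variable {A : Type*} [Ring A] [IsSemiprimaryRing A] [Module.Injective A A]

theorem jacobson_le_rightAnnihilator_leftSocle :
    Ring.jacobson A ≤ rightAnnihilator (leftSocle A) := by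
  intro a ha s hs
  obtain ⟨e, he, mul_one_sub_e⟩ := exists_mem_forall_mul_one_sub_mem_jacobson
    (LinearMap.ker (LinearMap.toSpanSingleton A A (s * a)))
  have e_mul : e * (s * a) = 0 := he
  -- Cutting `s` down to `(1 - e) * s` makes right multiplication by `a` injective on its multiples.
  have mul_eq_zero (x : A) (hx : x * ((1 - e) * s * a) = 0) : x * ((1 - e) * s) = 0 := by
    rw [← mul_assoc]
    refine hs _ (mul_one_sub_e x ?_)
    rw [LinearMap.mem_ker, LinearMap.toSpanSingleton_apply, smul_eq_mul]
    rwa [mul_assoc, sub_mul, one_mul, e_mul, sub_zero] at hx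
  obtain ⟨b, hb⟩ := exists_eq_mul_of_forall_mul_eq_zero mul_eq_zero
  have isUnit_one_sub : IsUnit (1 - a * b) := by
    obtain ⟨n, hn⟩ := IsSemiprimaryRing.isNilpotent (R := A)
    have pow_mem : (a * b) ^ n ∈ Ring.jacobson A ^ n :=
      Submodule.pow_mem_pow _ (Ideal.mul_mem_right b _ ha) n
    exact IsNilpotent.isUnit_one_sub ⟨n, by rwa [hn] at pow_mem⟩
  have one_sub_e_mul : (1 - e) * s = 0 := by
    rw [← isUnit_one_sub.mul_left_eq_zero, mul_sub, mul_one, ← mul_assoc, ← hb, sub_self]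
  calc s * a = (1 - e) * s * a + e * (s * a) := by noncomm_ring
    _ = 0 := by rw [one_sub_e_mul, e_mul, zero_mul, add_zero]

theorem rightAnnihilator_leftSocle_le_jacobson :
    rightAnnihilator (leftSocle A) ≤ Ring.jacobson A := by
  refine le_jacobson_of_forall_exists_one_sub_mul_eq_one fun x hx ↦ ?_
  have annihilator_eq_bot : LinearMap.ker (LinearMap.toSpanSingleton A A (1 - x)) = ⊥ := by
    by_contra ne_bot
    obtain ⟨s, hs, hs0, mem_leftSocle⟩ :=
      exists_ne_zero_smul_eq_zero_of_isNilpotent (IsSemiprimaryRing.isNilpotent (R := A)) ne_bot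
    have s_mul : s * (1 - x) = 0 := hs
    rw [mul_sub, mul_one, hx s mem_leftSocle, sub_zero] at s_mul
    exact hs0 s_mul
  obtain ⟨v, hv⟩ := exists_eq_mul_of_forall_mul_eq_zero (t := 1 - x) (y := 1) fun y hy ↦ by
    rw [LinearMap.ker_eq_bot'.mp annihilator_eq_bot y hy, zero_mul]
  exact ⟨v, hv.symm⟩

theorem mem_of_forall_mul_mem_leftSocle_mul {I : Ideal A} (hI : Ring.jacobson A ≤ I) {a : A}
    (ha : ∀ s ∈ leftSocle A, s * a ∈ leftSocle A * I) : a ∈ I := by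
  obtain ⟨e, he, mul_one_sub_e⟩ := exists_mem_forall_mul_one_sub_mem_jacobson I
  have mul_one_sub_e_eq_zero : ∀ z ∈ leftSocle A * I, z * (1 - e) = 0 := by
    intro z hz
    induction hz using Submodule.mul_induction_on' with
    | mem_mul_mem s hs x hx =>
      rw [mul_assoc, jacobson_le_rightAnnihilator_leftSocle (mul_one_sub_e x hx) s hs]
    | add y _ z _ hy hz => rw [add_mul, hy, hz, add_zero]
  have mem_jacobson : a * (1 - e) ∈ Ring.jacobson A :=
    rightAnnihilator_leftSocle_le_jacobson fun s hs ↦ by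
      rw [← mul_assoc, mul_one_sub_e_eq_zero _ (ha s hs)]
  have a_eq : a = a * (1 - e) + a * e := by noncomm_ring
  rw [a_eq]
  exact I.add_mem (hI mem_jacobson) (I.mul_mem_left a he)

theorem injOn_leftSocle_mul :
    Set.InjOn (leftSocle A * ·) {I : Ideal A | Ring.jacobson A ≤ I} := by
  intro I hI I' hI' h
  have le_of_mul_eq {I I' : Ideal A} (hI' : Ring.jacobson A ≤ I')
      (h : leftSocle A * I = leftSocle A * I') : I ≤ I' := fun a ha ↦
    mem_of_forall_mul_mem_leftSocle_mul hI' fun s hs ↦ h ▸ Ideal.mul_mem_mul hs ha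
  exact le_antisymm (le_of_mul_eq hI' h) (le_of_mul_eq hI h.symm)

theorem injOn_mul_leftSocle :
    Set.InjOn (· * leftSocle A) {I : Ideal A | I.IsTwoSided ∧ Ring.jacobson A ≤ I} := by
  set U := {I : Ideal A | I.IsTwoSided ∧ Ring.jacobson A ≤ I}
  let D := {N : Ideal A | N.IsTwoSided ∧ N ≤ leftSocle A}
  have finite_U : U.Finite := finite_setOf_isTwoSided_jacobson_le
  have image_eq : (· * leftSocle A) '' U = D := by
    refine subset_antisymm ?_ ?_
    · rintro _ ⟨I, ⟨_, -⟩, rfl⟩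
      exact ⟨inferInstance, Ideal.mul_le_right⟩
    · rintro N ⟨_, hN⟩
      refine ⟨_, ⟨inferInstance, fun j hj ↦ ?_⟩, colon_leftSocle_mul hN⟩
      exact Submodule.mem_colon.mpr fun s hs ↦ by simp [hs j hj]
  have finite_D : D.Finite := image_eq ▸ finite_U.image _
  have mapsTo : ∀ I ∈ U, leftSocle A * I ∈ D := by
    rintro I ⟨_, -⟩
    exact ⟨inferInstance, Ideal.mul_le_left⟩
  have ncard_le : U.ncard ≤ D.ncard :=
    Set.ncard_le_ncard_of_injOn _ mapsTo (injOn_leftSocle_mul.mono fun _ ↦ And.right) finite_D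
  refine Set.injOn_of_ncard_image_eq (le_antisymm (Set.ncard_image_le finite_U) ?_) finite_U
  rwa [image_eq]

theorem annihilator_leftSocle : (leftSocle A).annihilator = Ring.jacobson A := by
  have jacobson_le : Ring.jacobson A ≤ (leftSocle A).annihilator := fun j hj ↦
    Submodule.mem_annihilator.mpr fun s hs ↦ hs j hj
  refine injOn_mul_leftSocle ⟨?_, jacobson_le⟩ ⟨inferInstance, le_rfl⟩ ?_
  · exact inferInstanceAs (Module.annihilator A (leftSocle A)).IsTwoSided
  · have annihilator_mul : (leftSocle A).annihilator * leftSocle A = ⊥ :=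
      Submodule.annihilator_smul _
    exact annihilator_mul.trans
      (le_bot_iff.mp (annihilator_mul ▸ Ideal.mul_mono_left jacobson_le)).symm

end SelfInjective

/-- A ring is *left Kasch* if every simple left module embeds into it, that is, if every maximal
left ideal annihilates a nonzero element from the left. -/
def IsLeftKasch (A : Type*) [Ring A] : Prop :=
  ∀ m : Ideal A, m.IsMaximal → ∃ y ≠ 0, ∀ x ∈ m, x * y = 0

theorem IsLeftKasch.exists_linearMap_ne_zero {A : Type*} [Ring A] (hA : IsLeftKasch A)
    (T : Type*) [AddCommGroup T] [Module A T] [IsSimpleModule A T] : ∃ f : T →ₗ[A] A, f ≠ 0 := by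
  obtain ⟨m, hm, ⟨equiv⟩⟩ := isSimpleModule_iff_quot_maximal.mp ‹IsSimpleModule A T›
  obtain ⟨y, hy0, hy⟩ := hA m hm
  let g : A ⧸ m →ₗ[A] A := Submodule.liftQ m (LinearMap.toSpanSingleton A A y) hy
  refine ⟨g ∘ₗ equiv.toLinearMap, fun h ↦ hy0 ?_⟩
  have g_one : g (Submodule.Quotient.mk 1) = y := one_mul y
  simpa [g_one] using LinearMap.congr_fun h (equiv.symm (Submodule.Quotient.mk 1))

theorem isLeftKasch_of_injective (A : Type*) [Ring A] [IsSemiprimaryRing A]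
    [Module.Injective A A] : IsLeftKasch A := by
  intro m hm
  obtain ⟨e, he, mul_one_sub_e⟩ := exists_mem_forall_mul_one_sub_mem_jacobson m
  have notMem : 1 - e ∉ (leftSocle A).annihilator := fun mem ↦ by
    have one_sub_e_mem : 1 - e ∈ m :=
      Ring.jacobson_le_of_isMaximal m (annihilator_leftSocle (A := A) ▸ mem)
    exact hm.ne_top (m.eq_top_iff_one.mpr (sub_add_cancel 1 e ▸ m.add_mem one_sub_e_mem he))
  obtain ⟨s, hs, hs0⟩ : ∃ s ∈ leftSocle A, (1 - e) * s ≠ 0 := by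
    simpa only [Submodule.mem_annihilator, not_forall, exists_prop, smul_eq_mul] using notMem
  exact ⟨_, hs0, fun x hx ↦ by rw [← mul_assoc, hs _ (mul_one_sub_e x hx)]⟩

section Dimension

theorem lift_mk_pow_aleph0_le_lift_rank_of_forall_exists {K : Type u} {V : Type v} {W : Type*}
    [Field K] [AddCommGroup V] [Module K V] [AddCommGroup W] [Module K W] (φ : ℕ → V →ₗ[K] W)
    (w : ℕ → W) (hw : ∀ n, w n ≠ 0) (h : ∀ c : ℕ → K, ∃ v, ∀ n, φ n v = c n • w n) :
    lift.{v} #K ^ ℵ₀ ≤ lift.{u} (Module.rank K V) := by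
  have exists_dual (n : ℕ) : ∃ ψ : Module.Dual K W, ψ (w n) ≠ 0 := by
    simpa using (Module.forall_dual_apply_eq_zero_iff K (w n)).not.mpr (hw n)
  choose ψ hψ using exists_dual
  have surjective : Function.Surjective (LinearMap.pi fun n ↦ ψ n ∘ₗ φ n) := fun c ↦ by
    obtain ⟨v, hv⟩ := h fun n ↦ c n / ψ n (w n)
    exact ⟨v, funext fun n ↦ by simp [hv, hψ]⟩
  simpa [rank_fun_infinite] using LinearMap.lift_rank_le_of_surjective _ surjective

theorem exists_linearMap_extending_of_iSupIndep {R : Type u} {Q : Type v} {M ι : Type*} [Ring R]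
    [Small.{v} R] [AddCommGroup Q] [Module R Q] [Module.Injective R Q] [AddCommGroup M]
    [Module R M] {p : ι → Submodule R M} (hp : iSupIndep p) (f : ∀ i, p i →ₗ[R] Q) :
    ∃ g : M →ₗ[R] Q, ∀ i (x : p i), g x = f i x := by
  classical
  obtain ⟨g, hg⟩ := Module.Injective.extension_property R Q _ _
    (DFinsupp.lsum ℕ fun i ↦ (p i).subtype) hp.dfinsupp_lsum_injective (DFinsupp.lsum ℕ f)
  exact ⟨g, fun i x ↦ by simpa using LinearMap.congr_fun hg (DFinsupp.single i x)⟩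

variable {K : Type u} {A : Type v} [Field K] [Ring A] [Algebra K A] [Module.Injective A A]

theorem IsLeftKasch.lift_mk_pow_aleph0_le_lift_rank (hA : IsLeftKasch A) {X : Ideal A} {M : Type*}
    [AddCommGroup M] [Module A M] {g : X →ₗ[A] M} (hg : Function.Surjective g)
    {p : ℕ → Submodule A M} (hp : iSupIndep p) [∀ n, IsSimpleModule A (p n)] :
    lift.{v} #K ^ ℵ₀ ≤ lift.{u} (Module.rank K A) := by
  choose f hf using fun n ↦ hA.exists_linearMap_ne_zero (p n)
  choose t ht using fun n ↦ DFunLike.ne_iff.mp (hf n)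
  choose y hy using fun n ↦ hg (t n)
  refine lift_mk_pow_aleph0_le_lift_rank_of_forall_exists (fun n ↦ LinearMap.mulLeft K (y n : A))
    (fun n ↦ f n (t n)) ht fun c ↦ ?_
  obtain ⟨h, hh⟩ := exists_linearMap_extending_of_iSupIndep hp fun n ↦
    LinearMap.toSpanSingleton A A (algebraMap K A (c n)) ∘ₗ f n
  obtain ⟨k, hk⟩ := Module.Baer.of_injective ‹_› X (h ∘ₗ g)
  refine ⟨k 1, fun n ↦ ?_⟩
  calc (y n : A) * k 1 = k (y n) := by rw [← smul_eq_mul, ← map_smul, smul_eq_mul, mul_one]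
    _ = h (t n) := by rw [hk _ (y n).2, LinearMap.comp_apply, hy]
    _ = f n (t n) * algebraMap K A (c n) := hh n (t n)
    _ = c n • f n (t n) := by rw [← Algebra.commutes, Algebra.smul_def]

theorem IsLeftKasch.finite_of_isSemisimpleModule (hA : IsLeftKasch A)
    (hK : lift.{u} (Module.rank K A) < lift.{v} #K ^ ℵ₀) (X : Ideal A) (N : Submodule A X)
    [IsSemisimpleModule A (X ⧸ N)] : Module.Finite A (X ⧸ N) := by
  obtain ⟨s, indep, sSup_eq, simple⟩ :=
    IsSemisimpleModule.exists_sSupIndep_sSup_simples_eq_top A (X ⧸ N)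
  have finite : s.Finite := by
    by_contra infinite
    let emb := Set.Infinite.natEmbedding s infinite
    have simple_emb (n : ℕ) : IsSimpleModule A (emb n : Submodule A (X ⧸ N)) := simple _ (emb n).2
    have indep_emb : iSupIndep fun n ↦ (emb n : Submodule A (X ⧸ N)) :=
      ((sSupIndep_iff s).mp indep).comp emb.injective
    exact hK.not_ge (hA.lift_mk_pow_aleph0_le_lift_rank N.mkQ_surjective indep_emb)
  refine (IsSemisimpleModule.finite_tfae.out 0 4).mpr ?_
  exact ⟨s, finite, indep, sSup_eq, simple⟩

end Dimension

theorem faith_qf_of_countable_dimension_general (K : Type u) [Field K] (A : Type v) [Ring A]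
    [Algebra K A] (hsp : IsSemiprimary A) (hinj : Module.Injective A A)
    (hdim : lift.{u} (Module.rank K A) < lift.{v} #K ^ ℵ₀) : IsQuasiFrobenius A := by
  have : IsSemiprimaryRing A := hsp.isSemiprimaryRing
  have : IsNoetherianRing A :=
    isNoetherianRing_of_forall_finite_of_isSemisimpleModule fun X N _ ↦
      (isLeftKasch_of_injective A).finite_of_isSemisimpleModule hdim X N
  exact ⟨hinj, IsSemiprimaryRing.isNoetherian_iff_isArtinian.mp this⟩

/-- A semiprimary left self-injective algebra over a field `K` whose dimension over `K`
is at most countable is quasi-Frobenius. -/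
theorem faith_qf_of_countable_dimension
    (K : Type*) [Field K] (A : Type*) [Ring A] [Algebra K A]
    (hsp : IsSemiprimary A) (hinj : Module.Injective A A)
    (hdim : Module.rank K A ≤ ℵ₀) :
    IsQuasiFrobenius A := by
  have one_lt : 1 < lift #K := one_lt_lift_iff.mpr (one_lt_iff_nontrivial.mpr inferInstance)
  exact faith_qf_of_countable_dimension_general K A hsp hinj
    ((lift_le_aleph0.mpr hdim).trans_lt (cantor' ℵ₀ one_lt))
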